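/- Let C ≥ 0 and suppose f : S¹ → ℝ is representable by a non-negative finite Borel measure with total mass C. Then there exists a unique non-negative finite Borel measure μ on S¹ with μ(S¹) = (1/4)·‖∂₋f‖_TV(S¹) such that the signed measure μ̄ = μ + (C − (1/4)·‖∂₋f‖_TV(S¹))·H¹ is a non-negative measure and f(x) = ∫_{S¹} d_{S¹}(x,y) μ̄(dy) for all x ∈ S¹. -/

import Mathlib

open MeasureTheory Real Filter Set Complex
open scoped ENNReal NNReal Classical

noncomputable section

instance : MeasurableSpace Circle := borel Circle
instance : BorelSpace Circle := ⟨rfl⟩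

namespace CirclePaper

/-- The spherical (arc-length) distance on the unit circle `S¹ ⊆ ℝ² ≃ ℂ`:
`d_{S¹}(x,y) = arccos ⟨x,y⟩ = arccos (Re (x * conj y))`. -/
def dS1 (x y : Circle) : ℝ := Real.arccos (((x : ℂ) * (starRingEnd ℂ) (y : ℂ)).re)

/-- The antipodal map `T x = -x` (multiplication by `exp(iπ) = -1`). -/
def antipode (x : Circle) : Circle := Circle.exp π * x

/-- Integral of a function against a signed measure (via the Jordan decomposition). -/
def sInt (l : SignedMeasure Circle) (f : Circle → ℝ) : ℝ :=
  (∫ y, f y ∂l.toJordanDecomposition.posPart) - (∫ y, f y ∂l.toJordanDecomposition.negPart)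

/-- `f_λ(x) = ∫_{S¹} d_{S¹}(x,y) λ(dy)`. -/
def fRep (l : SignedMeasure Circle) (x : Circle) : ℝ := sInt l (fun y => dS1 x y)

/-- `f : S¹ → ℝ` has left derivative `L` at `x` w.r.t. the covering `q(t) = exp(it)`,
i.e. `(f(x +_q t) - f(x))/t → L` as `t → 0⁻`. -/
def HasLeftDerivCircleAt (f : Circle → ℝ) (L : ℝ) (x : Circle) : Prop :=
  Filter.Tendsto (fun t : ℝ => (f (Circle.exp t * x) - f x) / t)
    (nhdsWithin 0 (Set.Iio 0)) (nhds L)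

/-- `h : ℝ → ℝ` has left derivative `L` at `t`: `(h(t+s) - h(t))/s → L` as `s → 0⁻`. -/
def HasLeftDerivAtR (h : ℝ → ℝ) (L : ℝ) (t : ℝ) : Prop :=
  Filter.Tendsto (fun s : ℝ => (h (t + s) - h t) / s)
    (nhdsWithin 0 (Set.Iio 0)) (nhds L)

/-- The total variation `‖g‖_{TV(S¹)}` of `g : S¹ → ℝ`: the supremum of
`Σ |g(q(t_i)) - g(q(t_{i+1}))|` over partitions `0 = t_0 ≤ … ≤ t_{n+1} = 2π`. -/
def circleTV (g : Circle → ℝ) : ℝ≥0∞ := eVariationOn (g ∘ Circle.exp) (Set.Icc 0 (2 * π))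

/-- `f` is Lipschitz continuous with respect to the spherical distance. -/
def LipschitzCircle (f : Circle → ℝ) : Prop := ∃ K : ℝ, ∀ x y, |f x - f y| ≤ K * dS1 x y

/-- The normalized Hausdorff 1-measure on `S¹`, i.e. the rotation-invariant Borel
probability measure (the pushforward of normalized Lebesgue measure on `[0, 2π)`). -/
def hausOne : Measure Circle :=
  (ENNReal.ofReal (2 * π))⁻¹ • Measure.map Circle.exp (volume.restrict (Set.Ico 0 (2 * π)))

instance : IsFiniteMeasure hausOne := by
  constructor
  have h1 : (Measure.map Circle.exp (volume.restrict (Set.Ico 0 (2 * π)))) Set.univ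
      = volume (Set.Ico 0 (2 * π)) := by
    rw [Measure.map_apply Circle.exp.continuous.measurable MeasurableSet.univ]
    simp
  simp only [hausOne, Measure.smul_apply, smul_eq_mul, h1, Real.volume_Ico]
  refine ENNReal.mul_lt_top ?_ ?_
  · exact ENNReal.inv_lt_top.mpr (ENNReal.ofReal_pos.mpr (by positivity))
  · exact ENNReal.ofReal_lt_top

/-- The half-open arc `[x, T(x)) = {x +_q t : t ∈ [0, π)}` of length `π` starting at `x`. -/
def halfArc (x : Circle) : Set Circle := (fun t : ℝ => Circle.exp t * x) '' Set.Ico 0 π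

/-- A Borel measure on the circle, regarded as a signed measure
(defined to be `0` if the measure is not finite). -/
def msigned (μ : Measure Circle) : SignedMeasure Circle :=
  if h : IsFiniteMeasure μ then @Measure.toSignedMeasure _ _ μ h else 0

/-- Jordan-type decomposition for a pair of finite measures. -/
lemma jordan_pair {α : Type*} [MeasurableSpace α] (a b : Measure α) [IsFiniteMeasure a]
    [IsFiniteMeasure b] : ∃ (m n : Measure α) (P : Set α), MeasurableSet P ∧
      a + n = m + b ∧ m Pᶜ = 0 ∧ n P = 0 ∧ (∀ τ : Measure α, a ≤ τ + b → m ≤ τ) ∧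
      (∀ τ : Measure α, b ≤ τ + a → n ≤ τ) := by
  obtain ⟨P, hP, h1, h2⟩ := hahn_decomposition a b
  have r1 : b.restrict P ≤ a.restrict P := by
    rw [Measure.le_iff]; intro s hs
    rw [Measure.restrict_apply hs, Measure.restrict_apply hs]
    exact h1 _ (hs.inter hP) inter_subset_right
  have r2 : a.restrict Pᶜ ≤ b.restrict Pᶜ := by
    rw [Measure.le_iff]; intro s hs
    rw [Measure.restrict_apply hs, Measure.restrict_apply hs]
    exact h2 _ (hs.inter hP.compl) inter_subset_right
  refine ⟨a - b, b - a, P, hP, ?_, ?_, ?_, fun τ h => Measure.sub_le_of_le_add h,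
    fun τ h => Measure.sub_le_of_le_add h⟩
  · have e1 : (a + (b - a)).restrict P = ((a - b) + b).restrict P := by
      rw [Measure.restrict_add, Measure.restrict_add,
        Measure.restrict_sub_eq_restrict_sub_restrict hP,
        Measure.restrict_sub_eq_restrict_sub_restrict hP, Measure.sub_eq_zero_of_le r1,
        Measure.sub_add_cancel_of_le r1, add_zero]
    have e2 : (a + (b - a)).restrict Pᶜ = ((a - b) + b).restrict Pᶜ := by
      rw [Measure.restrict_add, Measure.restrict_add,
        Measure.restrict_sub_eq_restrict_sub_restrict hP.compl,
        Measure.restrict_sub_eq_restrict_sub_restrict hP.compl, Measure.sub_eq_zero_of_le r2,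
        add_comm (a.restrict Pᶜ), Measure.sub_add_cancel_of_le r2, zero_add]
    rw [← Measure.restrict_add_restrict_compl (μ := a + (b - a)) hP, e1, e2,
      Measure.restrict_add_restrict_compl hP]
  · exact Measure.sub_apply_eq_zero_of_restrict_le_restrict r2 hP.compl
  · exact Measure.sub_apply_eq_zero_of_restrict_le_restrict r1 hP

lemma real_compl_small {α : Type*} [MeasurableSpace α] [TopologicalSpace α] [T2Space α]
    [BorelSpace α] (m : Measure α) [IsFiniteMeasure m] [m.InnerRegularCompactLTTop] (P : Set α)
    (hP : MeasurableSet P) (h0 : m Pᶜ = 0) (ε : ℝ) (hε : 0 < ε) :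
    ∃ K ⊆ P, IsCompact K ∧ m.real univ - ε ≤ m.real K := by
  obtain ⟨K, hK, hKc, hlt⟩ := hP.exists_isCompact_lt_add (μ := m) (measure_ne_top _ _)
    (ε := ENNReal.ofReal ε) (by simpa using hε)
  refine ⟨K, hK, hKc, ?_⟩
  have h1 : m P = m univ := by
    rw [← measure_add_measure_compl hP, h0, add_zero]
  rw [h1] at hlt
  have := ENNReal.toReal_mono (by finiteness) hlt.le
  rw [ENNReal.toReal_add (by finiteness) (by finiteness), ENNReal.toReal_ofReal hε.le] at this
  simp only [Measure.real]; linarith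

lemma tv_eq (m n : Measure ℝ) [IsFiniteMeasure m] [IsFiniteMeasure n] (L : ℝ) (hL : 0 < L)
    (P : Set ℝ) (hP : MeasurableSet P) (hmP : m Pᶜ = 0) (hnP : n P = 0)
    (hm : m (Ico 0 L)ᶜ = 0) (hn : n (Ico 0 L)ᶜ = 0) (G : ℝ → ℝ)
    (hG : ∀ s t, 0 ≤ s → s ≤ t → t ≤ L →
      G t - G s = 2 * (m.real (Ico s t) - n.real (Ico s t))) :
    eVariationOn G (Icc 0 L) = ENNReal.ofReal (2 * (m.real univ + n.real univ)) := by
  have split : ∀ (τ : Measure ℝ) [IsFiniteMeasure τ] (A : Set ℝ) (s t : ℝ), s ≤ t →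
      τ.real (Ico s t ∩ A) = τ.real (Iio t ∩ A) - τ.real (Iio s ∩ A) := by
    intro τ _ A s t hst
    have h : Ico s t ∩ A = (Iio t ∩ A) \ (Iio s) := by
      ext x; simp only [mem_inter_iff, mem_Ico, Set.mem_sdiff, mem_Iio, not_lt]; tauto
    have h' : Iio s ∩ A = (Iio t ∩ A) ∩ Iio s := by
      ext x; simp only [mem_inter_iff, mem_Iio]
      constructor
      · rintro ⟨h1, h2⟩; exact ⟨⟨by linarith, h2⟩, h1⟩
      · tauto
    have := measureReal_inter_add_sdiff (μ := τ) (s := Iio t ∩ A) (t := Iio s) measurableSet_Iio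
    rw [h, h']; linarith
  have full : ∀ (τ : Measure ℝ) [IsFiniteMeasure τ], τ (Ico 0 L)ᶜ = 0 → ∀ A,
      τ.real (Iio L ∩ A) - τ.real (Iio 0 ∩ A) = τ.real A := by
    intro τ _ h0 A
    rw [← split τ A 0 L hL.le]
    have := measureReal_inter_add_sdiff (μ := τ) (s := A) (t := Ico 0 L) measurableSet_Ico
    have h2 : τ.real (A \ Ico 0 L) = 0 := by
      rw [measureReal_eq_zero_iff]
      exact measure_mono_null (fun x hx => hx.2) h0
    rw [inter_comm]; linarith
  apply le_antisymm
  · refine iSup_le ?_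
    rintro ⟨k, u, hu, us⟩
    set V : ℝ → ℝ := fun t => 2 * (m.real (Iio t ∩ univ) + n.real (Iio t ∩ univ)) with hV
    have key : ∀ s t, 0 ≤ s → s ≤ t → t ≤ L → |G t - G s| ≤ V t - V s := by
      intro s t h0 hst ht
      rw [hG s t h0 hst ht]
      have e1 := split m univ s t hst
      have e2 := split n univ s t hst
      have p1 : 0 ≤ m.real (Ico s t ∩ univ) := measureReal_nonneg
      have p2 : 0 ≤ n.real (Ico s t ∩ univ) := measureReal_nonneg
      simp only [hV]
      simp only [inter_univ] at *
      rw [abs_le]; constructor <;> linarith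
    have mono : ∀ s t, 0 ≤ s → s ≤ t → t ≤ L → V s ≤ V t := fun s t h0 hst ht => by
      have := key s t h0 hst ht
      have := abs_nonneg (G t - G s); linarith
    calc ∑ i ∈ Finset.range k, edist (G (u (i+1))) (G (u i))
        ≤ ∑ i ∈ Finset.range k, ENNReal.ofReal (V (u (i+1)) - V (u i)) := by
          refine Finset.sum_le_sum fun i _ => ?_
          rw [edist_dist, Real.dist_eq]
          exact ENNReal.ofReal_le_ofReal (key _ _ (us i).1 (hu (Nat.le_succ i)) (us _).2)
      _ = ENNReal.ofReal (∑ i ∈ Finset.range k, (V (u (i+1)) - V (u i))) := by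
          rw [ENNReal.ofReal_sum_of_nonneg]
          intro i _
          have := mono _ _ (us i).1 (hu (Nat.le_succ i)) (us _).2
          linarith
      _ ≤ _ := by
          refine ENNReal.ofReal_le_ofReal ?_
          rw [Finset.sum_range_sub (fun i => V (u i))]
          have a1 := mono _ _ le_rfl (us 0).1 (us 0).2
          have a2 := mono _ _ (us k).1 (us k).2 le_rfl
          have f1 := full m hm univ
          have f2 := full n hn univ
          have : V L - V 0 = 2 * (m.real univ + n.real univ) := by
            simp only [hV]; rw [← f1, ← f2]; ring
          linarith
  · refine ENNReal.le_of_forall_pos_le_add ?_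
    intro ε hε hfin
    have hε' : (0:ℝ) < ε / 8 := by positivity
    obtain ⟨K1, hK1, cK1, b1⟩ := real_compl_small m P hP hmP _ hε'
    obtain ⟨K2, hK2, cK2, b2⟩ := real_compl_small n Pᶜ hP.compl (by simpa using hnP) _ hε'
    have hdis : Disjoint K1 K2 := disjoint_compl_right.mono hK1 hK2
    obtain ⟨δ, hδ, hdist⟩ : ∃ δ > 0, ∀ x ∈ K1, ∀ y ∈ K2, δ ≤ |x - y| := by
      obtain ⟨r, hr, h⟩ := Metric.exists_pos_forall_lt_edist cK1 cK2.isClosed hdis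
      refine ⟨r, hr, fun x hx y hy => ?_⟩
      have := h x hx y hy
      rw [edist_dist, ← ENNReal.ofReal_coe_nnreal, ENNReal.ofReal_lt_ofReal_iff_of_nonneg (by positivity)] at this
      rw [← Real.dist_eq]; exact this.le
    obtain ⟨N, hN⟩ := exists_nat_gt (L / δ)
    have hNpos : (0:ℝ) < N := lt_trans (by positivity) hN
    have hmesh : L / N ≤ δ := by
      rw [div_lt_iff₀ hδ] at hN
      rw [div_le_iff₀ hNpos]; linarith
    set u : ℕ → ℝ := fun i => L / N * i with hu
    set W : ℝ → ℝ := fun t => 2 * (m.real (Iio t ∩ K1) + n.real (Iio t ∩ K2)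
      - m.real (Iio t ∩ K1ᶜ) - n.real (Iio t ∩ K2ᶜ)) with hW
    have hstep : ∀ i, u (i+1) = u i + L / N := by intro i; simp only [hu]; push_cast; ring
    have hq : 0 < L / N := by positivity
    have umono : Monotone u := monotone_nat_of_le_succ fun i => by rw [hstep]; linarith
    have u0 : u 0 = 0 := by simp [hu]
    have uN : u N = L := by simp only [hu]; field_simp
    have key : ∀ s t, 0 ≤ s → s ≤ t → t ≤ L → t - s ≤ δ → W t - W s ≤ |G t - G s| := by
      intro s t h0 hst ht hts
      rw [hG s t h0 hst ht]
      have e1 := split m K1 s t hst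
      have e2 := split m K1ᶜ s t hst
      have e3 := split n K2 s t hst
      have e4 := split n K2ᶜ s t hst
      have p1 : 0 ≤ m.real (Ico s t ∩ K1ᶜ) := measureReal_nonneg
      have p2 : 0 ≤ n.real (Ico s t ∩ K2ᶜ) := measureReal_nonneg
      have q1 := measureReal_inter_add_sdiff (μ := m) (s := Ico s t) (t := K1) cK1.measurableSet
      have q2 := measureReal_inter_add_sdiff (μ := n) (s := Ico s t) (t := K2) cK2.measurableSet
      rw [Set.sdiff_eq] at q1 q2
      have : Ico s t ∩ K1 = ∅ ∨ Ico s t ∩ K2 = ∅ := by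
        by_contra! hcon
        obtain ⟨⟨x, hx, hx1⟩, ⟨y, hy, hy1⟩⟩ := hcon
        have := hdist x hx1 y hy1
        have : |x - y| < δ := by
          rw [abs_lt]; constructor <;> linarith [hx.1, hx.2, hy.1, hy.2]
        linarith
      simp only [hW]
      rcases this with h | h
      · have z : m.real (Ico s t ∩ K1) = 0 := by rw [h]; simp
        have := neg_abs_le (2 * (m.real (Ico s t) - n.real (Ico s t)))
        linarith
      · have z : n.real (Ico s t ∩ K2) = 0 := by rw [h]; simp
        have := le_abs_self (2 * (m.real (Ico s t) - n.real (Ico s t)))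
        linarith
    have hmem : ∀ i ≤ N, u i ∈ Icc 0 L := fun i hi =>
      ⟨by rw [← u0]; exact umono (Nat.zero_le i), by rw [← uN]; exact umono hi⟩
    have hsum := eVariationOn.sum_le_of_monotoneOn_Iic (f := G) (s := Icc 0 L) (n := N) (u := u)
      (umono.monotoneOn _) hmem
    refine le_trans ?_ (add_le_add_left hsum _)
    have : ∑ i ∈ Finset.range N, edist (G (u (i + 1))) (G (u i))
        = ENNReal.ofReal (∑ i ∈ Finset.range N, |G (u (i + 1)) - G (u i)|) := by
      rw [ENNReal.ofReal_sum_of_nonneg (fun _ _ => abs_nonneg _)]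
      refine Finset.sum_congr rfl fun i _ => ?_
      rw [edist_dist, Real.dist_eq]
    rw [this, ← ENNReal.ofReal_coe_nnreal, ← ENNReal.ofReal_add
      (Finset.sum_nonneg fun _ _ => abs_nonneg _) ε.coe_nonneg]
    refine ENNReal.ofReal_le_ofReal ?_
    have hb : ∑ i ∈ Finset.range N, (W (u (i+1)) - W (u i))
        ≤ ∑ i ∈ Finset.range N, |G (u (i + 1)) - G (u i)| := by
      refine Finset.sum_le_sum fun i hi => ?_
      have hi' := Finset.mem_range.1 hi
      exact key _ _ (hmem i hi'.le).1 (umono (Nat.le_succ i)) (hmem (i+1) hi').2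
        (by rw [hstep]; linarith)
    rw [Finset.sum_range_sub (fun i => W (u i)), u0, uN] at hb
    have f1 := full m hm K1
    have f2 := full m hm K1ᶜ
    have f3 := full n hn K2
    have f4 := full n hn K2ᶜ
    have g1 := measureReal_add_measureReal_compl (μ := m) cK1.measurableSet
    have g2 := measureReal_add_measureReal_compl (μ := n) cK2.measurableSet
    simp only [hW] at hb
    linarith

/-- The angle of a point of the circle in `[0, 2π)`. -/
def th (y : Circle) : ℝ := if arg (y : ℂ) < 0 then arg (y : ℂ) + 2 * π else arg (y : ℂ)

lemma th_nonneg (y : Circle) : 0 ≤ th y := by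
  unfold th
  have := neg_pi_lt_arg (y : ℂ)
  split_ifs with h
  · linarith [Real.pi_pos]
  · linarith

lemma th_lt (y : Circle) : th y < 2 * π := by
  unfold th
  have := arg_le_pi (y : ℂ)
  split_ifs with h
  · linarith
  · linarith [Real.pi_pos]

lemma exp_th (y : Circle) : Circle.exp (th y) = y := by
  unfold th
  split_ifs with h
  · rw [Circle.exp_add, Circle.exp_two_pi, mul_one, Circle.exp_arg]
  · rw [Circle.exp_arg]

lemma measurable_th : Measurable th := by
  have h : Measurable (fun y : Circle => arg (y : ℂ)) :=
    Complex.measurable_arg.comp (by fun_prop : Continuous (fun y : Circle => (y : ℂ))).measurable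
  exact Measurable.ite (measurableSet_lt h measurable_const) (h.add_const _) h

lemma exp_inj_aux {a b : ℝ} (ha : 0 ≤ a) (ha' : a < 2 * π) (hb : 0 ≤ b) (hb' : b < 2 * π)
    (h : Circle.exp a = Circle.exp b) : a = b := by
  obtain ⟨k, hk⟩ := Circle.exp_eq_exp.1 h
  have hk0 : k = 0 := by
    have hp := Real.pi_pos
    have h1 : (k : ℝ) < 1 := by
      by_contra! hc
      nlinarith
    have h2 : (-1 : ℝ) < k := by
      by_contra! hc
      nlinarith
    have h1' : k < 1 := by exact_mod_cast h1
    have h2' : -1 < k := by exact_mod_cast h2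
    omega
  rw [hk, hk0]; simp

lemma th_antipode (y : Circle) :
    th (antipode y) = if th y < π then th y + π else th y - π := by
  have h0 := th_nonneg y
  have h1 := th_lt y
  have hp := Real.pi_pos
  have key : ∀ b, 0 ≤ b → b < 2 * π → Circle.exp b = antipode y → th (antipode y) = b := by
    intro b hb hb' h
    exact exp_inj_aux (th_nonneg _) (th_lt _) hb hb' (by rw [exp_th, h])
  split_ifs with h
  · refine key _ (by linarith) (by linarith) ?_
    rw [Circle.exp_add, exp_th, antipode, mul_comm]
  · refine key _ (by linarith) (by linarith) ?_
    have : Circle.exp (th y - π) = Circle.exp (th y - π + 2 * π) := by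
      rw [Circle.exp_add, Circle.exp_two_pi, mul_one]
    rw [this, show th y - π + 2 * π = π + th y by ring, Circle.exp_add, exp_th, antipode]

lemma continuous_antipode : Continuous antipode := by
  unfold antipode; fun_prop

lemma antipode_antipode (y : Circle) : antipode (antipode y) = y := by
  unfold antipode
  rw [← mul_assoc, ← Circle.exp_add, ← two_mul, Circle.exp_two_pi, one_mul]

lemma dS1_exp (t u : ℝ) : dS1 (Circle.exp t) (Circle.exp u) = Real.arccos (Real.cos (t - u)) := by
  unfold dS1
  congr 1
  rw [Real.cos_sub]
  simp [Circle.coe_exp, Complex.exp_ofReal_mul_I_re, Complex.exp_ofReal_mul_I_im]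

lemma acos_cos_abs {a : ℝ} (h : |a| ≤ π) : Real.arccos (Real.cos a) = |a| := by
  rw [← Real.cos_abs, Real.arccos_cos (abs_nonneg _) h]

lemma acos_cos_abs' {a : ℝ} (h : π ≤ |a|) (h' : |a| ≤ 2 * π) :
    Real.arccos (Real.cos a) = 2 * π - |a| := by
  rw [← Real.cos_abs, ← Real.cos_two_pi_sub, Real.arccos_cos (by linarith) (by linarith)]

lemma acos_cos_le (a : ℝ) : Real.arccos (Real.cos a) ≤ |a| := by
  rcases le_total |a| π with h | h
  · rw [acos_cos_abs h]
  · exact (Real.arccos_le_pi _).trans h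

lemma exists_rep (a : ℝ) : ∃ b, Real.cos b = Real.cos a ∧ (∀ t, Real.cos (b + t) = Real.cos (a + t))
    ∧ Real.arccos (Real.cos a) = |b| := by
  have hm := toIocMod_mem_Ioc Real.two_pi_pos (-π) a
  set b := toIocMod Real.two_pi_pos (-π) a with hb
  have h1 : ∀ t, Real.cos (b + t) = Real.cos (a + t) := by
    intro t
    have h := self_sub_toIocDiv_zsmul Real.two_pi_pos (-π) a
    rw [← hb] at h
    rw [← h, zsmul_eq_mul, show a - toIocDiv Real.two_pi_pos (-π) a * (2 * π) + t
      = (a + t) - toIocDiv Real.two_pi_pos (-π) a * (2 * π) by ring, Real.cos_sub_int_mul_two_pi]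
  have h0 : Real.cos b = Real.cos a := by simpa using h1 0
  refine ⟨b, h0, h1, ?_⟩
  rw [← h0, acos_cos_abs]
  rw [abs_le]; constructor <;> linarith [hm.1, hm.2]

lemma acos_cos_add_le (a t : ℝ) :
    Real.arccos (Real.cos (a + t)) ≤ Real.arccos (Real.cos a) + |t| := by
  obtain ⟨b, -, h1, h2⟩ := exists_rep a
  rw [h2, ← h1]
  exact (acos_cos_le _).trans (abs_add_le _ _)

lemma acos_cos_lip (a t : ℝ) :
    |Real.arccos (Real.cos (a + t)) - Real.arccos (Real.cos a)| ≤ |t| := by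
  have h1 := acos_cos_add_le a t
  have h2 := acos_cos_add_le (a + t) (-t)
  rw [add_neg_cancel_right, abs_neg] at h2
  rw [abs_le]; constructor <;> linarith

lemma dS1_lip (t : ℝ) (x y : Circle) : |dS1 (Circle.exp t * x) y - dS1 x y| ≤ |t| := by
  rw [← exp_th x, ← exp_th y, ← Circle.exp_add, dS1_exp, dS1_exp,
    show t + th x - th y = (th x - th y) + t by ring]
  exact acos_cos_lip _ _

lemma dS1_antipode (x y : Circle) : dS1 x (antipode y) = π - dS1 x y := by
  rw [← exp_th x, ← exp_th y, antipode, ← Circle.exp_add, dS1_exp, dS1_exp,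
    show th x - (π + th y) = (th x - th y) - π by ring, Real.cos_sub_pi, Real.arccos_neg]

lemma continuous_dS1 (x : Circle) : Continuous (fun y => dS1 x y) := by
  unfold dS1
  refine Real.continuous_arccos.comp (Complex.continuous_re.comp ?_)
  fun_prop

lemma dS1_bound (x y : Circle) : ‖dS1 x y‖ ≤ π := by
  rw [Real.norm_eq_abs, abs_of_nonneg (show 0 ≤ dS1 x y from Real.arccos_nonneg _)]
  exact Real.arccos_le_pi _

lemma integrable_dS1 (ρ : Measure Circle) [IsFiniteMeasure ρ] (x : Circle) :
    Integrable (fun y => dS1 x y) ρ :=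
  Integrable.of_bound (continuous_dS1 x).aestronglyMeasurable π (ae_of_all _ (dS1_bound x))

/-- Left derivative (in `t`) of the distance, for `t ∈ (0, 2π]`. -/
def kk (t : ℝ) (u : ℝ) : ℝ :=
  if u < π then (if u < t ∧ t ≤ u + π then 1 else -1)
  else (if u - π < t ∧ t ≤ u then -1 else 1)

lemma acos_left (u t : ℝ) (hu : 0 ≤ u) (hu' : u < 2 * π) (ht : 0 < t) (ht' : t ≤ 2 * π) :
    ∀ᶠ s in nhdsWithin 0 (Iio (0:ℝ)),
      (Real.arccos (Real.cos (t + s - u)) - Real.arccos (Real.cos (t - u))) / s = kk t u := by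
  have hp := Real.pi_pos
  have A : ∀ c : ℝ, c < 0 → ∀ᶠ s in nhdsWithin 0 (Iio (0:ℝ)), c < s := fun c hc =>
    nhdsWithin_le_nhds (lt_mem_nhds hc)
  have form : ∀ r, 0 ≤ r → r ≤ 2 * π → ∀ (_ : u < π),
     Real.arccos (Real.cos (r - u)) = if r ≤ u then u - r else
        if r ≤ u + π then r - u else 2 * π - (r - u) := by
    intro r h0 h1 h2
    split_ifs with c1 c2
    · rw [acos_cos_abs] <;> rw [abs_of_nonpos (by linarith)] <;> linarith
    · rw [acos_cos_abs] <;> rw [abs_of_nonneg (by linarith)] <;> linarith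
    · rw [acos_cos_abs'] <;> rw [abs_of_nonneg (by linarith)] <;> linarith
  have form' : ∀ r, 0 ≤ r → r ≤ 2 * π → ∀ (_ : π ≤ u),
     Real.arccos (Real.cos (r - u)) = if r ≤ u - π then 2 * π - (u - r) else
        if r ≤ u then u - r else r - u := by
    intro r h0 h1 h2
    split_ifs with c1 c2
    · rw [acos_cos_abs'] <;> rw [abs_of_nonpos (by linarith)] <;> linarith
    · rw [acos_cos_abs] <;> rw [abs_of_nonpos (by linarith)] <;> linarith
    · rw [acos_cos_abs] <;> rw [abs_of_nonneg (by linarith)] <;> linarith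
  have hneg : ∀ᶠ s in nhdsWithin 0 (Iio (0:ℝ)), s < 0 := self_mem_nhdsWithin
  have hA0 := A (-t) (by linarith)
  have hA : ∀ c, c < t → ∀ᶠ s in nhdsWithin 0 (Iio (0:ℝ)), c < t + s := fun c hc => by
    filter_upwards [A (c - t) (by linarith)] with s hs; linarith
  have hA' : ∀ c, ∀ᶠ s in nhdsWithin 0 (Iio (0:ℝ)), (c < t → c < t + s) := fun c => by
    by_cases hc : c < t
    · filter_upwards [hA c hc] with s hs _; exact hs
    · exact Eventually.of_forall fun s h => absurd h hc
  filter_upwards [hneg, hA0, hA' u, hA' (u + π), hA' (u - π)] with s h1 h2 h3 h4 h5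
  rw [div_eq_iff h1.ne]
  rcases lt_or_ge u π with hc | hc
  · rw [form _ (by linarith) (by linarith) hc, form _ ht.le ht' hc]
    unfold kk
    rw [if_pos hc]
    by_cases k1 : u < t
    · have k1' := h3 k1
      by_cases k2 : u + π < t
      · have k2' := h4 k2
        rw [if_neg (by linarith), if_neg (by linarith), if_neg (by linarith),
          if_neg (by linarith), if_neg (by intro h; linarith [h.2])]
        ring
      · rw [if_neg (by linarith), if_pos (by linarith), if_neg (by linarith),
          if_pos (by linarith), if_pos ⟨k1, by linarith⟩]
        ring
    · rw [if_pos (by linarith), if_pos (by linarith), if_neg (fun h => k1 h.1)]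
      ring
  · rw [form' _ (by linarith) (by linarith) hc, form' _ ht.le ht' hc]
    unfold kk
    rw [if_neg (not_lt.2 hc)]
    by_cases k1 : u - π < t
    · have k1' := h5 k1
      by_cases k2 : u < t
      · have k2' := h3 k2
        rw [if_neg (by linarith), if_neg (by linarith), if_neg (by linarith),
          if_neg (by linarith), if_neg (by intro h; linarith [h.2])]
        ring
      · rw [if_neg (by linarith), if_pos (by linarith), if_neg (by linarith),
          if_pos (by linarith), if_pos ⟨k1, by linarith⟩]
        ring
    · rw [if_pos (by linarith), if_pos (by linarith), if_neg (fun h => k1 h.1)]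
      ring

lemma measurable_kk (t : ℝ) : Measurable (kk t) := by
  unfold kk
  refine Measurable.ite measurableSet_Iio (Measurable.ite ?_ measurable_const measurable_const)
    (Measurable.ite ?_ measurable_const measurable_const)
  · exact (measurableSet_lt measurable_id measurable_const).inter
      (measurableSet_le measurable_const (measurable_id.add_const _))
  · exact (measurableSet_lt (measurable_id.sub_const _) measurable_const).inter
      (measurableSet_le measurable_const measurable_id)

lemma kk_bound (t u : ℝ) : ‖kk t u‖ ≤ 1 := by
  unfold kk; split_ifs <;> simp

lemma kk_formula (t : ℝ) (ht : 0 ≤ t) (ht' : t ≤ 2 * π) (y : Circle) :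
    kk t (th y) = kk 0 (th y) + (2 * (th ⁻¹' Iio t).indicator 1 y
      - 2 * (th ⁻¹' Iio t).indicator 1 (antipode y)) := by
  have h0 := th_nonneg y
  have h1 := th_lt y
  have hp := Real.pi_pos
  simp only [indicator, mem_preimage, mem_Iio, th_antipode, kk, Pi.one_apply]
  split_ifs <;> first | (norm_num; done) | grind

lemma kk_two_pi (y : Circle) : kk (2 * π) (th y) = kk 0 (th y) := by
  have h0 := th_nonneg y
  have h1 := th_lt y
  have hp := Real.pi_pos
  simp only [kk]
  split_ifs <;> first | rfl | grind

lemma leftDeriv_formula (ρ : Measure Circle) [IsFiniteMeasure ρ] (f f' : Circle → ℝ)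
    (hf : ∀ x, f x = ∫ y, dS1 x y ∂ρ) (hf' : ∀ x, HasLeftDerivCircleAt f (f' x) x)
    (t : ℝ) (ht : 0 < t) (ht' : t ≤ 2 * π) :
    f' (Circle.exp t) = ∫ y, kk t (th y) ∂ρ := by
  refine tendsto_nhds_unique (hf' (Circle.exp t)) ?_
  have e : (fun s : ℝ => (f (Circle.exp s * Circle.exp t) - f (Circle.exp t)) / s)
      = fun s => ∫ y, (dS1 (Circle.exp s * Circle.exp t) y - dS1 (Circle.exp t) y) / s ∂ρ := by
    funext s
    rw [hf, hf, integral_div, integral_sub (integrable_dS1 ρ _) (integrable_dS1 ρ _)]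
  rw [e]
  refine tendsto_integral_filter_of_dominated_convergence (fun _ => 1) ?_ ?_
    (integrable_const _) ?_
  · refine Eventually.of_forall fun s => ?_
    exact (((continuous_dS1 _).sub (continuous_dS1 _)).div_const _).aestronglyMeasurable
  · filter_upwards [self_mem_nhdsWithin] with s hs
    refine ae_of_all _ fun y => ?_
    have hs' : (0:ℝ) < |s| := abs_pos.2 (ne_of_lt hs)
    rw [Real.norm_eq_abs, abs_div, div_le_one hs']
    exact dS1_lip _ _ _
  · refine ae_of_all _ fun y => ?_
    refine tendsto_const_nhds.congr' ?_
    filter_upwards [acos_left (th y) t (th_nonneg y) (th_lt y) ht ht'] with s hs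
    rw [← hs]
    conv_rhs => rw [← exp_th y]
    rw [← Circle.exp_add, dS1_exp, dS1_exp, add_comm s t]

lemma leftDeriv_formula' (ρ : Measure Circle) [IsFiniteMeasure ρ] (f f' : Circle → ℝ)
    (hf : ∀ x, f x = ∫ y, dS1 x y ∂ρ) (hf' : ∀ x, HasLeftDerivCircleAt f (f' x) x)
    (t : ℝ) (ht : 0 ≤ t) (ht' : t ≤ 2 * π) :
    f' (Circle.exp t) = f' (Circle.exp 0) + 2 * (ρ.real (th ⁻¹' Iio t)
      - (ρ.map antipode).real (th ⁻¹' Iio t)) := by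
  have h0 : f' (Circle.exp 0) = ∫ y, kk 0 (th y) ∂ρ := by
    rw [Circle.exp_zero, ← Circle.exp_two_pi, leftDeriv_formula ρ f f' hf hf' (2 * π)
      Real.two_pi_pos le_rfl]
    simp only [kk_two_pi]
  rcases ht.eq_or_lt with rfl | hpos
  · have : th ⁻¹' Iio 0 = ∅ := by
      ext y; simp [th_nonneg y]
    simp [this]
  have hm : MeasurableSet (th ⁻¹' Iio t) := measurable_th measurableSet_Iio
  have hm' : MeasurableSet (antipode ⁻¹' (th ⁻¹' Iio t)) := continuous_antipode.measurable hm
  have i0 : Integrable (fun y => kk 0 (th y)) ρ :=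
    Integrable.of_bound ((measurable_kk 0).comp measurable_th).aestronglyMeasurable 1
      (ae_of_all _ fun y => kk_bound _ _)
  have i1 : Integrable ((th ⁻¹' Iio t).indicator (1 : Circle → ℝ)) ρ :=
    (integrable_const (1:ℝ)).indicator hm
  have ee : (fun y => (th ⁻¹' Iio t).indicator (1 : Circle → ℝ) (antipode y))
      = (antipode ⁻¹' (th ⁻¹' Iio t)).indicator 1 := by
    funext y; simp [indicator]
  have i2 : Integrable (fun y => (th ⁻¹' Iio t).indicator (1 : Circle → ℝ) (antipode y)) ρ := by
    rw [ee]; exact (integrable_const (1:ℝ)).indicator hm'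
  rw [leftDeriv_formula ρ f f' hf hf' t hpos ht', h0]
  simp only [kk_formula t ht ht']
  have i3 : Integrable (fun y => 2 * (th ⁻¹' Iio t).indicator (1 : Circle → ℝ) y
      - 2 * (th ⁻¹' Iio t).indicator (1 : Circle → ℝ) (antipode y)) ρ :=
    (i1.const_mul 2).sub (i2.const_mul 2)
  rw [integral_add i0 i3,
    integral_sub (i1.const_mul 2) (i2.const_mul 2), integral_const_mul, integral_const_mul, ee,
    integral_indicator_one hm, integral_indicator_one hm',
    map_measureReal_apply continuous_antipode.measurable hm]
  ring

/-- Measures on the circle are determined by the initial arcs. -/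
lemma ext_th (a b : Measure Circle) [IsFiniteMeasure a] [IsFiniteMeasure b]
    (huniv : a univ = b univ)
    (h : ∀ t, 0 ≤ t → t ≤ 2 * π → a.real (th ⁻¹' Iio t) = b.real (th ⁻¹' Iio t)) : a = b := by
  have hall : ∀ t, a (th ⁻¹' Iio t) = b (th ⁻¹' Iio t) := by
    intro t
    rcases lt_or_ge t 0 with h0 | h0
    · have : th ⁻¹' Iio t = ∅ := by
        ext y; simp; linarith [th_nonneg y]
      simp [this]
    rcases le_or_gt t (2 * π) with h1 | h1
    · exact (measureReal_eq_measureReal_iff).1 (h t h0 h1)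
    · have : th ⁻¹' Iio t = univ := by
        ext y; simp; linarith [th_lt y]
      rw [this, huniv]
  have hmap : a.map th = b.map th := by
    refine Measure.ext_of_Ici _ _ fun t => ?_
    rw [Measure.map_apply measurable_th measurableSet_Ici,
      Measure.map_apply measurable_th measurableSet_Ici, ← compl_Iio, preimage_compl,
      measure_compl (measurable_th measurableSet_Iio) (measure_ne_top _ _),
      measure_compl (measurable_th measurableSet_Iio) (measure_ne_top _ _), hall, huniv]
  have hid : ∀ c : Measure Circle, (c.map th).map Circle.exp = c := by
    intro c
    rw [Measure.map_map Circle.exp.continuous.measurable measurable_th]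
    have : (Circle.exp ∘ th : Circle → Circle) = id := by funext y; exact exp_th y
    rw [this, Measure.map_id]
  rw [← hid a, ← hid b, hmap]

lemma map_antipode_univ (a : Measure Circle) : (a.map antipode) univ = a univ := by
  rw [Measure.map_apply continuous_antipode.measurable MeasurableSet.univ, preimage_univ]

lemma map_antipode_map (a : Measure Circle) : (a.map antipode).map antipode = a := by
  rw [Measure.map_map continuous_antipode.measurable continuous_antipode.measurable]
  have : antipode ∘ antipode = id := by funext y; exact antipode_antipode y
  rw [this, Measure.map_id]

lemma repr_unique (a b : Measure Circle) [IsFiniteMeasure a] [IsFiniteMeasure b]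
    (f f' : Circle → ℝ)
    (ha : ∀ x, f x = ∫ y, dS1 x y ∂a) (hb : ∀ x, f x = ∫ y, dS1 x y ∂b)
    (hf' : ∀ x, HasLeftDerivCircleAt f (f' x) x) :
    a + b.map antipode = b + a.map antipode := by
  refine ext_th _ _ ?_ ?_
  · simp only [Measure.add_apply, map_antipode_univ]; rw [add_comm]
  · intro t h0 h1
    have e1 := leftDeriv_formula' a f f' ha hf' t h0 h1
    have e2 := leftDeriv_formula' b f f' hb hf' t h0 h1
    rw [measureReal_add_apply, measureReal_add_apply]
    linarith

lemma integral_map_antipode (a : Measure Circle) [IsFiniteMeasure a] (x : Circle) :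
    ∫ y, dS1 x y ∂(a.map antipode) = π * a.real univ - ∫ y, dS1 x y ∂a := by
  rw [integral_map continuous_antipode.measurable.aemeasurable
    (continuous_dS1 x).aestronglyMeasurable]
  simp only [dS1_antipode]
  rw [integral_sub (integrable_const _) (integrable_dS1 a x), integral_const, smul_eq_mul, mul_comm]

lemma hausOne_univ : hausOne univ = 1 := by
  have h1 : (Measure.map Circle.exp (volume.restrict (Set.Ico 0 (2 * π)))) Set.univ
      = ENNReal.ofReal (2 * π) := by
    rw [Measure.map_apply Circle.exp.continuous.measurable MeasurableSet.univ]
    simp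
  rw [hausOne, Measure.smul_apply, h1, smul_eq_mul]
  exact ENNReal.inv_mul_cancel (ENNReal.ofReal_pos.2 Real.two_pi_pos).ne' ENNReal.ofReal_ne_top

lemma hausOne_map : hausOne.map antipode = hausOne := by
  rw [hausOne, Measure.map_smul]
  congr 1
  have hexp : Measurable (Circle.exp : ℝ → Circle) := Circle.exp.continuous.measurable
  rw [Measure.map_map continuous_antipode.measurable hexp]
  have hc : (antipode ∘ Circle.exp : ℝ → Circle) = Circle.exp ∘ (fun t => π + t) := by
    funext t; simp [antipode, Circle.exp_add]
  rw [hc, ← Measure.map_map hexp (measurable_const_add π)]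
  have hr : (volume.restrict (Ico 0 (2 * π))).map (fun t : ℝ => π + t)
      = volume.restrict (Ico π (π + 2 * π)) := by
    have h1 := (measurePreserving_add_left (volume : Measure ℝ) π).restrict_preimage
      (s := Ico π (π + 2 * π)) measurableSet_Ico
    have h2 : (fun t : ℝ => π + t) ⁻¹' (Ico π (π + 2 * π)) = Ico 0 (2 * π) := by
      ext t; simp
    rw [h2] at h1
    exact h1.map_eq
  rw [hr]
  ext A hA
  have hB : MeasurableSet ((Circle.exp : ℝ → Circle) ⁻¹' A) := hexp hA
  rw [Measure.map_apply hexp hA, Measure.map_apply hexp hA, restrict_Ico_eq_restrict_Ioc,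
    restrict_Ico_eq_restrict_Ioc, Measure.restrict_apply hB, Measure.restrict_apply hB]
  have := (isAddFundamentalDomain_Ioc Real.two_pi_pos π volume).measure_set_eq
    (isAddFundamentalDomain_Ioc Real.two_pi_pos 0 volume) hB ?_
  · simpa using this
  · rintro ⟨g, hg⟩
    obtain ⟨k, rfl⟩ := AddSubgroup.mem_zmultiples_iff.1 hg
    ext x
    have : Circle.exp (k * (2 * π) + x) = Circle.exp x :=
      Circle.exp_eq_exp.2 ⟨k, by ring⟩
    simp only [mem_preimage, AddSubgroup.vadd_def, vadd_eq_add, zsmul_eq_mul, this]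

lemma msigned_eq (μ : Measure Circle) [IsFiniteMeasure μ] (c : ℝ≥0) :
    msigned μ + (c : ℝ) • hausOne.toSignedMeasure = (μ + c • hausOne).toSignedMeasure := by
  rw [msigned, dif_pos ‹_›, Measure.toSignedMeasure_add, Measure.toSignedMeasure_smul]
  rfl

lemma fRep_toSigned (ρ : Measure Circle) [IsFiniteMeasure ρ] (x : Circle) :
    fRep ρ.toSignedMeasure x = ∫ y, dS1 x y ∂ρ := by
  have : ρ.toSignedMeasure.toJordanDecomposition
      = ⟨ρ, 0, Measure.MutuallySingular.zero_right⟩ := by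
    apply SignedMeasure.toJordanDecomposition_eq
    simp [JordanDecomposition.toSignedMeasure]
  rw [fRep, sInt, this]
  simp

lemma circleTV_eq (ν m : Measure Circle) [IsFiniteMeasure ν] [IsFiniteMeasure m] (P : Set Circle)
    (hP : MeasurableSet P) (hm : m Pᶜ = 0) (hn : (m.map antipode) P = 0)
    (heq : ν + m.map antipode = m + ν.map antipode) (f f' : Circle → ℝ)
    (hν : ∀ x, f x = ∫ y, dS1 x y ∂ν) (hf' : ∀ x, HasLeftDerivCircleAt f (f' x) x) :
    (circleTV f').toReal / 4 = m.real univ := by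
  have hexp : Measurable (Circle.exp : ℝ → Circle) := Circle.exp.continuous.measurable
  have hpre : ∀ Q : Set Circle, th ⁻¹' (Circle.exp ⁻¹' Q) = Q := fun Q => by
    ext y; simp [exp_th]
  have hico : th ⁻¹' (Ico 0 (2 * π))ᶜ = ∅ := by
    ext y; simp [th_nonneg, th_lt]
  have h := tv_eq (m.map th) ((m.map antipode).map th) (2 * π) Real.two_pi_pos
    (Circle.exp ⁻¹' P) (hexp hP)
    (by rw [Measure.map_apply measurable_th (hexp hP).compl, ← preimage_compl, hpre, hm])
    (by rw [Measure.map_apply measurable_th (hexp hP), hpre, hn])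
    (by rw [Measure.map_apply measurable_th measurableSet_Ico.compl, hico, measure_empty])
    (by rw [Measure.map_apply measurable_th measurableSet_Ico.compl, hico, measure_empty])
    (f' ∘ Circle.exp) ?_
  · rw [circleTV, h]
    rw [map_measureReal_apply measurable_th MeasurableSet.univ,
      map_measureReal_apply measurable_th MeasurableSet.univ, preimage_univ,
      map_measureReal_apply continuous_antipode.measurable MeasurableSet.univ, preimage_univ,
      ENNReal.toReal_ofReal (by positivity)]
    ring
  · intro s t h0 hst ht
    have e1 := leftDeriv_formula' ν f f' hν hf' s h0 (hst.trans ht)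
    have e2 := leftDeriv_formula' ν f f' hν hf' t (h0.trans hst) ht
    have hE : ∀ r, ν.real (th ⁻¹' Iio r) + (m.map antipode).real (th ⁻¹' Iio r)
        = m.real (th ⁻¹' Iio r) + (ν.map antipode).real (th ⁻¹' Iio r) := by
      intro r
      rw [← measureReal_add_apply, heq, measureReal_add_apply]
    have hd : ∀ (τ : Measure Circle) [IsFiniteMeasure τ], (τ.map th).real (Ico s t)
        = τ.real (th ⁻¹' Iio t) - τ.real (th ⁻¹' Iio s) := by
      intro τ _
      rw [map_measureReal_apply measurable_th measurableSet_Ico, ← Iio_sdiff_Iio, preimage_sdiff,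
        measureReal_sdiff (preimage_mono (Iio_subset_Iio hst)) (measurable_th measurableSet_Iio)]
    rw [hd, hd, Function.comp_apply, Function.comp_apply, e1, e2]
    have := hE s
    have := hE t
    linarith

/-- If `f` is representable by a non-negative measure of total mass `C ≥ 0`,
then there is a unique non-negative measure `μ` with `μ(S¹) = (1/4)‖∂₋f‖_{TV(S¹)}` such
that `μ̄ = μ + (C - (1/4)‖∂₋f‖_{TV(S¹)})·H¹` is non-negative and `f = f_{μ̄}`. -/
theorem stmt16 (C : ℝ) (hC : 0 ≤ C) (f : Circle → ℝ)
    (ν : Measure Circle) (hνfin : IsFiniteMeasure ν)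
    (hνmass : ν Set.univ = ENNReal.ofReal C)
    (hν : ∀ x : Circle, f x = ∫ y, dS1 x y ∂ν)
    (f' : Circle → ℝ) (hf' : ∀ x : Circle, HasLeftDerivCircleAt f (f' x) x) :
    ∃! μ : Measure Circle,
      μ Set.univ = ENNReal.ofReal ((circleTV f').toReal / 4) ∧
      0 ≤ msigned μ + (C - (circleTV f').toReal / 4) • hausOne.toSignedMeasure ∧
      ∀ x : Circle,
        f x = fRep (msigned μ + (C - (circleTV f').toReal / 4) • hausOne.toSignedMeasure) x := by
  classical
  have hνr : ν.real univ = C := by rw [Measure.real, hνmass, ENNReal.toReal_ofReal hC]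
  obtain ⟨m, n, P, hP, heq, hmP, hnP, hm, hn⟩ := jordan_pair ν (ν.map antipode)
  have hmν : m ≤ ν := hm ν (Measure.le_add_right le_rfl)
  have hnν : n ≤ ν.map antipode := hn _ (Measure.le_add_right le_rfl)
  have : IsFiniteMeasure m := isFiniteMeasure_of_le ν hmν
  have : IsFiniteMeasure n := isFiniteMeasure_of_le _ hnν
  have hTadd : ∀ a b : Measure Circle, (a + b).map antipode = a.map antipode + b.map antipode :=
    fun a b => Measure.map_add _ _ continuous_antipode.measurable
  have heq' : ν.map antipode + n.map antipode = m.map antipode + ν := by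
    rw [← hTadd, heq, hTadd, map_antipode_map]
  have h1 : m ≤ n.map antipode := by
    apply hm
    rw [add_comm, heq']
    exact Measure.le_add_left le_rfl
  have h2 : n ≤ m.map antipode := by
    apply hn
    rw [← heq']
    exact Measure.le_add_right le_rfl
  have h3 : n = m.map antipode := by
    refine le_antisymm h2 ?_
    have := Measure.map_mono h1 continuous_antipode.measurable
    rwa [map_antipode_map] at this
  subst h3
  have hTV := circleTV_eq ν m P hP hmP hnP heq f f' hν hf'
  rw [hTV]
  have hle : m.real univ ≤ C := by
    rw [← hνr]
    exact ENNReal.toReal_mono (measure_ne_top _ _) (hmν univ)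
  obtain ⟨c, hc⟩ : ∃ c : ℝ≥0, (c : ℝ) = C - m.real univ := ⟨⟨_, sub_nonneg.2 hle⟩, rfl⟩
  rw [← hc]
  have hmu : m univ = ENNReal.ofReal (m.real univ) := by
    rw [Measure.real, ENNReal.ofReal_toReal (measure_ne_top _ _)]
  have hH : ∀ x, ∫ y, dS1 x y ∂hausOne = π / 2 := by
    intro x
    have := integral_map_antipode hausOne x
    rw [hausOne_map] at this
    have h1 : hausOne.real univ = 1 := by simp [Measure.real, hausOne_univ]
    rw [h1] at this
    linarith
  have hint : ∀ (μ : Measure Circle) [IsFiniteMeasure μ] (x : Circle),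
      ∫ y, dS1 x y ∂(μ + c • hausOne) = ∫ y, dS1 x y ∂μ + c * (π / 2) := by
    intro μ _ x
    rw [integral_add_measure (integrable_dS1 _ _) (integrable_dS1 _ _), integral_smul_nnreal_measure,
      hH]
    rfl
  refine ⟨m, ⟨hmu, ?_, ?_⟩, ?_⟩
  · rw [msigned_eq]
    exact Measure.zero_le_toSignedMeasure _
  · intro x
    rw [msigned_eq, fRep_toSigned, hint, hν]
    have e := congrArg (fun τ : Measure Circle => ∫ y, dS1 x y ∂τ) heq
    rw [integral_add_measure (integrable_dS1 _ _) (integrable_dS1 _ _),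
      integral_add_measure (integrable_dS1 _ _) (integrable_dS1 _ _), integral_map_antipode,
      integral_map_antipode, hνr] at e
    rw [hc]
    linarith
  · rintro μ ⟨hμu, -, hμf⟩
    have : IsFiniteMeasure μ := ⟨by rw [hμu]; exact ENNReal.ofReal_lt_top⟩
    have hb : ∀ x, f x = ∫ y, dS1 x y ∂(μ + c • hausOne) := by
      intro x
      rw [hμf x, msigned_eq, fRep_toSigned]
    have hu := repr_unique ν (μ + c • hausOne) f f' hν hb hf'
    have hmc : (c • hausOne).map antipode = c • hausOne := by
      rw [Measure.map_smul, hausOne_map]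
    rw [hTadd, hmc, ← add_assoc, add_right_comm] at hu
    have hu' : ν + μ.map antipode = μ + ν.map antipode := by
      ext A hA
      have := congrArg (fun τ : Measure Circle => τ A) hu
      simp only [Measure.add_apply] at this ⊢
      rw [add_right_comm (μ A)] at this
      first
        | exact (ENNReal.add_left_inj (measure_ne_top _ _)).1 this
        | (rw [add_right_comm] at this
           exact (ENNReal.add_left_inj (measure_ne_top _ _)).1 this)
    have hmμ : m ≤ μ := by
      apply hm
      rw [← hu']
      exact Measure.le_add_right le_rfl
    exact (Measure.eq_of_le_of_measure_univ_eq hmμ (by rw [hμu, hmu])).symm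

end CirclePaper
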